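/- Let j ≥ 1. Let H and H' be complex Hilbert spaces, let (s_n)_{n ≥ 1} and (s'_n)_{n ≥ 1} be families of bounded operators on H and H' respectively with s_m^* s_n = δ_{mn}·1 and s'_m{}^* s'_n = δ_{mn}·1 for all m, n ≥ 1, and let Ω ∈ H and Ω' ∈ H' be unit vectors, cyclic for (s_n) and (s'_n) respectively, with s_j Ω = Ω and s'_j Ω' = Ω'. Then there exists a unitary operator U : H → H' such that U Ω = Ω' and U s_n = s'_n U for every n ≥ 1. (Any two representations in the class P∞(j) are unitarily equivalent.) -/

import Mathlib

/-!
The relations `sᵢ* sₖ = δᵢₖ` and `sⱼ Ω = Ω` give `sᵢ* Ω = δᵢⱼ Ω`, so the span of the vectors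
`s_{i₁} ⋯ s_{iₖ} Ω` is already stable under the adjoints and, `Ω` being cyclic, it is dense.
Moving operators across the inner product with the same relations computes every inner product of
two such vectors from `‖Ω‖` alone. Hence the vectors built from `Ω` and those built from `Ω'` have
the same Gram matrix, and matching them word by word extends to a unitary.
-/

open ContinuousLinearMap Submodule
open scoped InnerProductSpace

section DenseSpan

theorem map_mem_topologicalClosure_span {R M : Type*} [Semiring R] [AddCommMonoid M]
    [TopologicalSpace M] [Module R M] [ContinuousAdd M] [ContinuousConstSMul R M]
    {S : Set M} (T : M →L[R] M) (hT : ∀ x ∈ S, T x ∈ span R S) {v : M}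
    (hv : v ∈ (span R S).topologicalClosure) : T v ∈ (span R S).topologicalClosure :=
  have hspan : span R S ≤ (span R S).comap (T : M →ₗ[R] M) := span_le.2 hT
  map_mem_closure T.continuous hv hspan

variable {𝕜 E F α : Type*} [RCLike 𝕜]
  [NormedAddCommGroup E] [InnerProductSpace 𝕜 E] [NormedAddCommGroup F] [InnerProductSpace 𝕜 F]
  {v : α → E} {w : α → F}

theorem norm_linearCombination_eq_of_inner_eq (h : ∀ a b, ⟪v a, v b⟫_𝕜 = ⟪w a, w b⟫_𝕜)
    (c : α →₀ 𝕜) :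
    ‖Finsupp.linearCombination 𝕜 v c‖ = ‖Finsupp.linearCombination 𝕜 w c‖ := by
  simp only [@norm_eq_sqrt_re_inner 𝕜, Finsupp.linearCombination_apply, Finsupp.sum, sum_inner,
    inner_sum, inner_smul_left, inner_smul_right, h]

theorem exists_linearIsometryEquiv_of_inner_eq [CompleteSpace E] [CompleteSpace F]
    (hv : Dense (span 𝕜 (Set.range v) : Set E)) (hw : Dense (span 𝕜 (Set.range w) : Set F))
    (h : ∀ a b, ⟪v a, v b⟫_𝕜 = ⟪w a, w b⟫_𝕜) :
    ∃ U : E ≃ₗᵢ[𝕜] F, ∀ a, U (v a) = w a := by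
  rw [← Finsupp.range_linearCombination] at hv hw
  have hnorm (c : α →₀ 𝕜) := (norm_linearCombination_eq_of_inner_eq h c).symm
  refine ⟨(LinearEquiv.refl 𝕜 (α →₀ 𝕜)).extendOfIsometry _ _ hv hw hnorm, fun a => ?_⟩
  simpa only [LinearEquiv.refl_apply, Finsupp.linearCombination_single, one_smul] using
    LinearEquiv.extendOfIsometry_eq (LinearEquiv.refl 𝕜 (α →₀ 𝕜)) _ _ hv hw hnorm
      (Finsupp.single a 1)

end DenseSpan

section RowIsometry

variable {𝕜 ι H H' : Type*} [RCLike 𝕜]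
  [NormedAddCommGroup H] [InnerProductSpace 𝕜 H] [NormedAddCommGroup H'] [InnerProductSpace 𝕜 H']

/-- The vector `s_{i₁} ⋯ s_{iₖ} Ω` attached to the word `[i₁, …, iₖ]`. -/
def wordVector (s : ι → H →L[𝕜] H) (Ω : H) (w : List ι) : H :=
  (w.map s).prod Ω

@[simp]
theorem wordVector_nil (s : ι → H →L[𝕜] H) (Ω : H) : wordVector s Ω [] = Ω := rfl

@[simp]
theorem wordVector_cons (s : ι → H →L[𝕜] H) (Ω : H) (i : ι) (w : List ι) :
    wordVector s Ω (i :: w) = s i (wordVector s Ω w) := rfl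

variable [CompleteSpace H] [CompleteSpace H']

/-- `Ω` is cyclic for the family `s`: no proper closed subspace containing `Ω` is stable under all
the operators `s i` and their adjoints. -/
def IsCyclicVector (s : ι → H →L[𝕜] H) (Ω : H) : Prop :=
  ∀ K : Submodule 𝕜 H, IsClosed (K : Set H) → Ω ∈ K →
    (∀ i, ∀ v ∈ K, s i v ∈ K) → (∀ i, ∀ v ∈ K, adjoint (s i) v ∈ K) → K = ⊤

variable [DecidableEq ι]

/-- A row isometry: a family of isometries with pairwise orthogonal ranges, expressed by the
relations `sᵢ* sₖ = δᵢₖ`. For countably infinite `ι` and `𝕜 = ℂ` these are the representations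
of the Cuntz algebra `O∞`; for finite `ι`, those of the Cuntz–Toeplitz algebra. -/
def IsRowIsometry (s : ι → H →L[𝕜] H) : Prop :=
  ∀ i k, adjoint (s i) ∘L s k = if i = k then 1 else 0

namespace IsRowIsometry

variable {s : ι → H →L[𝕜] H} {s' : ι → H' →L[𝕜] H'} {Ω : H} {Ω' : H'} {j : ι}

theorem adjoint_apply_apply (hs : IsRowIsometry s) (i k : ι) (v : H) :
    adjoint (s i) (s k v) = if i = k then v else 0 := by
  rw [← comp_apply, hs i k]
  split_ifs <;> rfl

theorem adjoint_apply_of_fixed (hs : IsRowIsometry s) (hfix : s j Ω = Ω) (i : ι) :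
    adjoint (s i) Ω = if i = j then Ω else 0 := by
  simpa only [hfix] using hs.adjoint_apply_apply i j Ω

theorem adjoint_wordVector_mem_span (hs : IsRowIsometry s) (hfix : s j Ω = Ω) (i : ι)
    (w : List ι) : adjoint (s i) (wordVector s Ω w) ∈ span 𝕜 (Set.range (wordVector s Ω)) := by
  have hword (u : List ι) : wordVector s Ω u ∈ span 𝕜 (Set.range (wordVector s Ω)) :=
    subset_span (Set.mem_range_self u)
  cases w with
  | nil =>
    rw [wordVector_nil, hs.adjoint_apply_of_fixed hfix]
    split_ifs
    exacts [hword [], zero_mem _]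
  | cons k w =>
    rw [wordVector_cons, hs.adjoint_apply_apply]
    split_ifs
    exacts [hword w, zero_mem _]

theorem dense_span_range_wordVector (hs : IsRowIsometry s) (hcyc : IsCyclicVector s Ω)
    (hfix : s j Ω = Ω) : Dense (span 𝕜 (Set.range (wordVector s Ω)) : Set H) := by
  rw [dense_iff_topologicalClosure_eq_top]
  refine hcyc _ (isClosed_topologicalClosure _) ?_ (fun i v hv => ?_) (fun i v hv => ?_)
  · exact le_topologicalClosure _ (subset_span ⟨[], wordVector_nil s Ω⟩)
  · refine map_mem_topologicalClosure_span (s i) ?_ hv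
    rintro _ ⟨w, rfl⟩
    exact subset_span ⟨i :: w, wordVector_cons s Ω i w⟩
  · refine map_mem_topologicalClosure_span (adjoint (s i)) ?_ hv
    rintro _ ⟨w, rfl⟩
    exact hs.adjoint_wordVector_mem_span hfix i w

theorem inner_fixed_wordVector_eq (hs : IsRowIsometry s) (hs' : IsRowIsometry s')
    (hnorm : ‖Ω‖ = ‖Ω'‖) (hfix : s j Ω = Ω) (hfix' : s' j Ω' = Ω') (w : List ι) :
    ⟪Ω, wordVector s Ω w⟫_𝕜 = ⟪Ω', wordVector s' Ω' w⟫_𝕜 := by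
  induction w with
  | nil => simp only [wordVector_nil, inner_self_eq_norm_sq_to_K, hnorm]
  | cons k w ih =>
    simp only [wordVector_cons, ← adjoint_inner_left, hs.adjoint_apply_of_fixed hfix,
      hs'.adjoint_apply_of_fixed hfix']
    split_ifs
    · exact ih
    · simp only [inner_zero_left]

theorem inner_wordVector_eq (hs : IsRowIsometry s) (hs' : IsRowIsometry s')
    (hnorm : ‖Ω‖ = ‖Ω'‖) (hfix : s j Ω = Ω) (hfix' : s' j Ω' = Ω') (u w : List ι) :
    ⟪wordVector s Ω u, wordVector s Ω w⟫_𝕜 = ⟪wordVector s' Ω' u, wordVector s' Ω' w⟫_𝕜 := by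
  induction u generalizing w with
  | nil => exact hs.inner_fixed_wordVector_eq hs' hnorm hfix hfix' w
  | cons i u ih =>
    simp only [wordVector_cons, ← adjoint_inner_right]
    cases w with
    | nil =>
      simp only [wordVector_nil, hs.adjoint_apply_of_fixed hfix, hs'.adjoint_apply_of_fixed hfix']
      split_ifs
      · exact ih []
      · simp only [inner_zero_right]
    | cons k w =>
      simp only [wordVector_cons, hs.adjoint_apply_apply, hs'.adjoint_apply_apply]
      split_ifs
      · exact ih w
      · simp only [inner_zero_right]

end IsRowIsometry

theorem P_infty_j_unique_up_to_unitary_equivalence_general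
    {s : ι → H →L[𝕜] H} {s' : ι → H' →L[𝕜] H'} {Ω : H} {Ω' : H'} {j : ι}
    (hs : IsRowIsometry s) (hs' : IsRowIsometry s') (hnorm : ‖Ω‖ = ‖Ω'‖)
    (hcyc : IsCyclicVector s Ω) (hcyc' : IsCyclicVector s' Ω')
    (hfix : s j Ω = Ω) (hfix' : s' j Ω' = Ω') :
    ∃ U : H ≃ₗᵢ[𝕜] H', U Ω = Ω' ∧ ∀ i v, U (s i v) = s' i (U v) := by
  have hdense := hs.dense_span_range_wordVector hcyc hfix
  obtain ⟨U, hU⟩ := exists_linearIsometryEquiv_of_inner_eq hdense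
    (hs'.dense_span_range_wordVector hcyc' hfix')
    (hs.inner_wordVector_eq hs' hnorm hfix hfix')
  let T : H →L[𝕜] H' := U.toContinuousLinearEquiv
  have hintertwine (i : ι) : T ∘L s i = s' i ∘L T := by
    refine ContinuousLinearMap.ext_on hdense ?_
    rintro _ ⟨w, rfl⟩
    calc U (s i (wordVector s Ω w))
        = U (wordVector s Ω (i :: w)) := by rw [wordVector_cons]
      _ = s' i (wordVector s' Ω' w) := by rw [hU, wordVector_cons]
      _ = s' i (U (wordVector s Ω w)) := by rw [hU]
  exact ⟨U, hU [], fun i v => DFunLike.congr_fun (hintertwine i) v⟩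

end RowIsometry

section PositiveIndices

variable {𝕜 H : Type*} [RCLike 𝕜] [NormedAddCommGroup H] [InnerProductSpace 𝕜 H] [CompleteSpace H]
  {s : ℕ → H →L[𝕜] H}

theorem isRowIsometry_pnat
    (h : ∀ m n, 1 ≤ m → 1 ≤ n → adjoint (s m) ∘L s n = if m = n then 1 else 0) :
    IsRowIsometry fun n : ℕ+ => s n := fun m n => by
  simpa only [PNat.coe_inj] using h m n m.pos n.pos

theorem isCyclicVector_pnat {Ω : H}
    (h : ∀ K : Submodule 𝕜 H, IsClosed (K : Set H) → Ω ∈ K →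
      (∀ n, 1 ≤ n → ∀ v ∈ K, s n v ∈ K) → (∀ n, 1 ≤ n → ∀ v ∈ K, adjoint (s n) v ∈ K) → K = ⊤) :
    IsCyclicVector (fun n : ℕ+ => s n) Ω := fun K hK hΩ hsK hadjK =>
  h K hK hΩ (fun n hn => hsK ⟨n, hn⟩) fun n hn => hadjK ⟨n, hn⟩

end PositiveIndices

theorem P_infty_j_unique_up_to_unitary_equivalence
    {H : Type*} [NormedAddCommGroup H] [InnerProductSpace ℂ H] [CompleteSpace H]
    {H' : Type*} [NormedAddCommGroup H'] [InnerProductSpace ℂ H'] [CompleteSpace H']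
    (j : ℕ) (hj : 1 ≤ j)
    (s : ℕ → H →L[ℂ] H) (s' : ℕ → H' →L[ℂ] H')
    (hCuntz : ∀ m n, 1 ≤ m → 1 ≤ n →
      (ContinuousLinearMap.adjoint (s m)).comp (s n) =
        if m = n then (1 : H →L[ℂ] H) else 0)
    (hCuntz' : ∀ m n, 1 ≤ m → 1 ≤ n →
      (ContinuousLinearMap.adjoint (s' m)).comp (s' n) =
        if m = n then (1 : H' →L[ℂ] H') else 0)
    (Ω : H) (hΩnorm : ‖Ω‖ = 1)
    (Ω' : H') (hΩ'norm : ‖Ω'‖ = 1)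
    (hcyc : ∀ K : Submodule ℂ H, IsClosed (K : Set H) → Ω ∈ K →
      (∀ n, 1 ≤ n → ∀ v ∈ K, s n v ∈ K) →
      (∀ n, 1 ≤ n → ∀ v ∈ K, ContinuousLinearMap.adjoint (s n) v ∈ K) → K = ⊤)
    (hcyc' : ∀ K : Submodule ℂ H', IsClosed (K : Set H') → Ω' ∈ K →
      (∀ n, 1 ≤ n → ∀ v ∈ K, s' n v ∈ K) →
      (∀ n, 1 ≤ n → ∀ v ∈ K, ContinuousLinearMap.adjoint (s' n) v ∈ K) → K = ⊤)
    (hfix : s j Ω = Ω) (hfix' : s' j Ω' = Ω') :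
    ∃ U : H ≃ₗᵢ[ℂ] H', U Ω = Ω' ∧ ∀ n, 1 ≤ n → ∀ v : H, U (s n v) = s' n (U v) := by
  obtain ⟨U, hUΩ, hU⟩ := P_infty_j_unique_up_to_unitary_equivalence_general (ι := ℕ+) (j := ⟨j, hj⟩)
    (isRowIsometry_pnat hCuntz) (isRowIsometry_pnat hCuntz') (hΩnorm.trans hΩ'norm.symm)
    (isCyclicVector_pnat hcyc) (isCyclicVector_pnat hcyc') hfix hfix'
  exact ⟨U, hUΩ, fun n hn => hU ⟨n, hn⟩⟩
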